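/- Let A and B be m×m positive definite complex matrices. Then X = A^{1/2}(A^{-1/2}BA^{-1/2})^{1/2}A^{1/2} is the unique positive definite matrix X satisfying the Riccati equation X A^{-1} X = B. -/

import Mathlib

/-!
Congruence by `a^{1/2}` is a bijection of the positive cone. Because `a^{1/2} a⁻¹ a^{1/2} = 1`, the
substitution `x = a^{1/2} y a^{1/2}` turns `x a⁻¹ x` into `a^{1/2} y² a^{1/2}`, so the Riccati
equation `x a⁻¹ x = b` becomes `y² = a^{-1/2} b a^{-1/2}`, whose only positive solution is the
square root of the right-hand side.
-/

open Matrix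
open scoped ComplexOrder

noncomputable def matFun {m : ℕ} (f : ℝ → ℝ) (A : Matrix (Fin m) (Fin m) ℂ) :
    Matrix (Fin m) (Fin m) ℂ :=
  if hA : A.IsHermitian then
    (hA.eigenvectorUnitary : Matrix (Fin m) (Fin m) ℂ) *
      Matrix.diagonal (fun i => (f (hA.eigenvalues i) : ℂ)) *
      (star (hA.eigenvectorUnitary : Matrix (Fin m) (Fin m) ℂ))
  else 0

/-- The unique positive definite square root of a positive definite matrix
(realized via the spectral decomposition). -/
noncomputable def msqrt {m : ℕ} (A : Matrix (Fin m) (Fin m) ℂ) : Matrix (Fin m) (Fin m) ℂ :=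
  matFun Real.sqrt A

/-- The logarithm of a positive definite matrix: the unique Hermitian `L` with `exp L = A`. -/
noncomputable def mlog {m : ℕ} (A : Matrix (Fin m) (Fin m) ℂ) : Matrix (Fin m) (Fin m) ℂ :=
  matFun Real.log A

/-- The real power `A ^ t` of a positive definite matrix, via the spectral decomposition. -/
noncomputable def mpow {m : ℕ} (A : Matrix (Fin m) (Fin m) ℂ) (t : ℝ) : Matrix (Fin m) (Fin m) ℂ :=
  matFun (fun x => x ^ t) A

/-- The matrix geometric mean `A # B`. -/
noncomputable def gmean {m : ℕ} (A B : Matrix (Fin m) (Fin m) ℂ) : Matrix (Fin m) (Fin m) ℂ :=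
  msqrt A * msqrt ((msqrt A)⁻¹ * B * (msqrt A)⁻¹) * msqrt A

/-- The weighted geometric mean `A #_t B`. -/
noncomputable def wgmean {m : ℕ} (A B : Matrix (Fin m) (Fin m) ℂ) (t : ℝ) :
    Matrix (Fin m) (Fin m) ℂ :=
  msqrt A * mpow ((msqrt A)⁻¹ * B * (msqrt A)⁻¹) t * msqrt A

/-- The Frobenius (Hilbert–Schmidt) norm `‖X‖₂ = (Tr(X*X))^{1/2}`. -/
noncomputable def fnorm {m : ℕ} (X : Matrix (Fin m) (Fin m) ℂ) : ℝ :=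
  Real.sqrt ((Xᴴ * X).trace.re)

/-- The Riemannian metric `δ(A,B) = ‖log(A^{-1/2} B A^{-1/2})‖₂`. -/
noncomputable def rdist {m : ℕ} (A B : Matrix (Fin m) (Fin m) ℂ) : ℝ :=
  fnorm (mlog ((msqrt A)⁻¹ * B * (msqrt A)⁻¹))

/-- The Loewner order: `A ≤ B` iff `B - A` is positive semidefinite. -/
def Loewner {m : ℕ} (A B : Matrix (Fin m) (Fin m) ℂ) : Prop :=
  (B - A).PosSemidef

open scoped Ring

section StarAlgebra

variable {𝒜 : Type*} [PartialOrder 𝒜] [Ring 𝒜] [StarRing 𝒜] [TopologicalSpace 𝒜]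
  [StarOrderedRing 𝒜] [Algebra ℝ 𝒜] [ContinuousFunctionalCalculus ℝ 𝒜 IsSelfAdjoint]
  [NonnegSpectrumClass ℝ 𝒜] [IsSemitopologicalRing 𝒜]

theorem conjSqrt_nonneg {a b : 𝒜} (hb : 0 ≤ b) : 0 ≤ CFC.conjSqrt a b := by
  simpa only [map_zero] using CFC.conjSqrt_le_conjSqrt (c := a) hb

/-- The geometric mean `a # b = a^{1/2} (a^{-1/2} b a^{-1/2})^{1/2} a^{1/2}` of a strictly positive
element `a` and a nonnegative element `b`. Here `a^{-1/2}` is encoded as the square root of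
`a⁻¹ʳ`. -/
noncomputable def geometricMean (a b : 𝒜) : 𝒜 :=
  CFC.conjSqrt a (CFC.sqrt (CFC.conjSqrt a⁻¹ʳ b))

theorem geometricMean_nonneg (a b : 𝒜) : 0 ≤ geometricMean a b :=
  conjSqrt_nonneg (CFC.sqrt_nonneg _)

variable [T2Space 𝒜]

theorem conjSqrt_mul_ringInverse_mul_conjSqrt {a : 𝒜} (ha : IsStrictlyPositive a) (x y : 𝒜) :
    CFC.conjSqrt a x * a⁻¹ʳ * CFC.conjSqrt a y = CFC.conjSqrt a (x * y) := by
  have sqrt_mul_inverse_mul_sqrt : CFC.sqrt a * a⁻¹ʳ * CFC.sqrt a = 1 := by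
    simpa only [Ring.inverse_inverse ha.isUnit, CFC.conjSqrt_apply]
      using CFC.conjSqrt_ringInverse_self a⁻¹ʳ ha.ringInverse
  calc CFC.conjSqrt a x * a⁻¹ʳ * CFC.conjSqrt a y
      = CFC.sqrt a * x * (CFC.sqrt a * a⁻¹ʳ * CFC.sqrt a) * y * CFC.sqrt a := by
        simp only [CFC.conjSqrt_apply, mul_assoc]
    _ = CFC.conjSqrt a (x * y) := by
        simp only [sqrt_mul_inverse_mul_sqrt, CFC.conjSqrt_apply, mul_one, mul_assoc]

theorem isStrictlyPositive_geometricMean {a b : 𝒜} (ha : IsStrictlyPositive a)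
    (hb : IsStrictlyPositive b) : IsStrictlyPositive (geometricMean a b) :=
  (CFC.isStrictlyPositive_conjSqrt_iff a _ ha).2 <| IsStrictlyPositive.sqrt _ <|
    (CFC.isStrictlyPositive_conjSqrt_iff _ b ha.ringInverse).2 hb

theorem geometricMean_mul_ringInverse_mul_self {a b : 𝒜} (ha : IsStrictlyPositive a)
    (hb : 0 ≤ b) : geometricMean a b * a⁻¹ʳ * geometricMean a b = b := by
  rw [geometricMean, conjSqrt_mul_ringInverse_mul_conjSqrt ha,
    CFC.sqrt_mul_sqrt_self _ (conjSqrt_nonneg hb), CFC.conjSqrt_conjSqrt_ringInverse a b ha]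

theorem eq_geometricMean_of_mul_ringInverse_mul_self {a b x : 𝒜} (ha : IsStrictlyPositive a)
    (hx : 0 ≤ x) (h : x * a⁻¹ʳ * x = b) : x = geometricMean a b := by
  obtain ⟨y, hy, rfl⟩ : ∃ y, 0 ≤ y ∧ CFC.conjSqrt a y = x :=
    ⟨CFC.conjSqrt a⁻¹ʳ x, conjSqrt_nonneg hx, CFC.conjSqrt_conjSqrt_ringInverse a x ha⟩
  rw [geometricMean, ← h, conjSqrt_mul_ringInverse_mul_conjSqrt ha,
    CFC.conjSqrt_ringInverse_conjSqrt a _ ha, CFC.sqrt_mul_self y hy]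

theorem gmean_riccati_unique_general {a b : 𝒜} (ha : IsStrictlyPositive a) (hb : 0 ≤ b) :
    0 ≤ geometricMean a b ∧ geometricMean a b * a⁻¹ʳ * geometricMean a b = b ∧
      ∀ x : 𝒜, 0 ≤ x → x * a⁻¹ʳ * x = b → x = geometricMean a b :=
  ⟨geometricMean_nonneg a b, geometricMean_mul_ringInverse_mul_self ha hb,
    fun _ => eq_geometricMean_of_mul_ringInverse_mul_self ha⟩

end StarAlgebra

open scoped MatrixOrder

theorem matFun_eq_cfc {m : ℕ} (f : ℝ → ℝ) (A : Matrix (Fin m) (Fin m) ℂ) :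
    matFun f A = cfc f A := by
  by_cases hA : A.IsHermitian
  · rw [matFun, dif_pos hA, hA.cfc_eq, IsHermitian.cfc, Unitary.conjStarAlgAut_apply]
    rfl
  · rw [matFun, dif_neg hA, cfc_apply_of_not_predicate A (mt IsSelfAdjoint.isHermitian hA)]

theorem msqrt_eq_sqrt {m : ℕ} {A : Matrix (Fin m) (Fin m) ℂ} (hA : A.PosSemidef) :
    msqrt A = CFC.sqrt A := by
  rw [msqrt, matFun_eq_cfc, CFC.sqrt_eq_real_sqrt A hA.nonneg, cfcₙ_eq_cfc]

theorem gmean_eq_geometricMean {m : ℕ} {A B : Matrix (Fin m) (Fin m) ℂ} (hA : A.PosSemidef)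
    (hB : B.PosSemidef) : gmean A B = geometricMean A B := by
  have inv_sqrt_mul_mul_inv_sqrt :
      (msqrt A)⁻¹ * B * (msqrt A)⁻¹ = CFC.conjSqrt A⁻¹ʳ B := by
    rw [msqrt_eq_sqrt hA, nonsing_inv_eq_ringInverse, ← CFC.sqrt_ringInverse, CFC.conjSqrt_apply]
  rw [gmean, inv_sqrt_mul_mul_inv_sqrt, msqrt_eq_sqrt hA,
    msqrt_eq_sqrt (conjSqrt_nonneg hB.nonneg).posSemidef, geometricMean,
    CFC.conjSqrt_apply (c := A)]

/-- The geometric mean `A # B = A^{1/2}(A^{-1/2}BA^{-1/2})^{1/2}A^{1/2}` is the unique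
positive definite solution `X` of the Riccati equation `X A⁻¹ X = B`. -/
theorem gmean_riccati_unique {m : ℕ} (A B : Matrix (Fin m) (Fin m) ℂ)
    (hA : A.PosDef) (hB : B.PosDef) :
    (gmean A B).PosDef ∧ gmean A B * A⁻¹ * gmean A B = B ∧
      ∀ X : Matrix (Fin m) (Fin m) ℂ, X.PosDef → X * A⁻¹ * X = B → X = gmean A B := by
  have hA' : IsStrictlyPositive A := isStrictlyPositive_iff_posDef.2 hA
  have hB' : IsStrictlyPositive B := isStrictlyPositive_iff_posDef.2 hB
  obtain ⟨-, gmean_solves, solution_unique⟩ := gmean_riccati_unique_general hA' hB'.nonneg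
  rw [gmean_eq_geometricMean hA.posSemidef hB.posSemidef, nonsing_inv_eq_ringInverse]
  exact ⟨isStrictlyPositive_iff_posDef.1 (isStrictlyPositive_geometricMean hA' hB'),
    gmean_solves, fun X hX => solution_unique X hX.posSemidef.nonneg⟩
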